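/- For all integers m ≥ k ≥ 2 there exists an integer t = t(k, m) such that every finite k-uniform hypergraph with at least one edge having property δ_k(m) has property T_k(t); consequently, there exists a function f : ℕ → ℕ such that every finite k-uniform hypergraph H with at least one edge having property δ_k(m) satisfies χ(H) ≤ f(ω(H)), i.e., the class Δ_k(m) is χ-bounded. -/

import Mathlib

open scoped Classical

universe u

section SetSystems

variable {X : Type*}

/-- A finite family of sets is intersecting if all of its members have a common element. -/
def IsIntersecting (F : Finset (Set X)) : Prop :=
  ∃ x, ∀ K ∈ F, x ∈ K

/-- A convexity space: `∅` and the whole space are convex, convexity is closed under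
arbitrary (nonempty) intersections and under unions of (nonempty) chains. -/
def IsConvexitySpace (C : Set (Set X)) : Prop :=
  ∅ ∈ C ∧ Set.univ ∈ C ∧
    (∀ D ⊆ C, D.Nonempty → ⋂₀ D ∈ C) ∧
    (∀ D ⊆ C, D.Nonempty → IsChain (· ⊆ ·) D → ⋃₀ D ∈ C)

/-- The convex hull of `Y`: intersection of all convex sets containing `Y`. -/
def convHull (C : Set (Set X)) (Y : Set X) : Set X :=
  ⋂₀ {K | K ∈ C ∧ Y ⊆ K}

/-- `Y` admits a Radon partition: a partition into two disjoint parts whose hulls meet. -/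
def HasRadonPartition (C : Set (Set X)) (Y : Finset X) : Prop :=
  ∃ A B : Finset X, (↑A ∪ ↑B : Set X) = ↑Y ∧ Disjoint (↑A : Set X) (↑B : Set X) ∧
    (convHull C ↑A ∩ convHull C ↑B).Nonempty

/-- The Radon number is at most `n`: every finite subset of size at least `n`
admits a Radon partition. -/
def RadonLE (C : Set (Set X)) (n : ℕ) : Prop :=
  ∀ Y : Finset X, n ≤ Y.card → HasRadonPartition C Y

/-- `Y` admits a Tverberg `k`-partition: a partition into `k` pairwise disjoint parts
whose hulls have a common point. -/
def HasTverbergPartition (C : Set (Set X)) (k : ℕ) (Y : Finset X) : Prop :=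
  ∃ P : Fin k → Finset X, (⋃ i, (↑(P i) : Set X)) = ↑Y ∧
    (∀ i j, i ≠ j → Disjoint (↑(P i) : Set X) (↑(P j) : Set X)) ∧
    (⋂ i, convHull C ↑(P i)).Nonempty

/-- A minimally non-intersecting family: not intersecting, but every proper subfamily
obtained by deleting one member is intersecting. -/
def MinNonIntersecting (F : Finset (Set X)) : Prop :=
  ¬ IsIntersecting F ∧ ∀ K ∈ F, IsIntersecting (F.erase K)

/-- The Helly number of the set system `S` is at most `n`. -/
def HellyLE (S : Set (Set X)) (n : ℕ) : Prop :=
  ∀ F : Finset (Set X), ↑F ⊆ S → MinNonIntersecting F → F.card ≤ n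

/-- The colorful Helly number of the set system `S` is at most `m`. -/
def ColorfulHellyLE (S : Set (Set X)) (m : ℕ) : Prop :=
  ∀ F : Fin m → Finset (Set X), (∀ i, ↑(F i) ⊆ S) →
    (∀ K : Fin m → Set X, (∀ i, K i ∈ F i) → (⋂ i, K i).Nonempty) →
    ∃ i, IsIntersecting (F i)

/-- `S` satisfies the fractional Helly property for `k`-tuples with function `β`. -/
def FracHelly (S : Set (Set X)) (k : ℕ) (β : ℝ → ℝ) : Prop :=
  ∀ α ∈ Set.Ioo (0 : ℝ) 1, ∀ F : Finset (Set X), ↑F ⊆ S →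
    α * (F.card.choose k : ℝ) ≤
      (((F.powersetCard k).filter (fun G => IsIntersecting G)).card : ℝ) →
    ∃ G ⊆ F, IsIntersecting G ∧ β α * (F.card : ℝ) ≤ (G.card : ℝ)

/-- The transversal number of the finite family `F` is at most `n`: `F` can be
partitioned into (at most) `n` intersecting subfamilies. -/
def TransversalLE (F : Finset (Set X)) (n : ℕ) : Prop :=
  ∃ P : Fin n → Finset (Set X), (∀ i, P i ⊆ F) ∧ (∀ K ∈ F, ∃! i, K ∈ P i) ∧
    ∀ i, (P i).Nonempty → IsIntersecting (P i)

/-- The fractional transversal number of `F` is at most `t`: there is a finitely supported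
fractional transversal of total weight at most `t`. -/
def FracTransversalLE (F : Finset (Set X)) (t : ℝ) : Prop :=
  ∃ f : X →₀ ℝ, (∀ x, 0 ≤ f x ∧ f x ≤ 1) ∧
    (∀ S ∈ F, 1 ≤ ∑ x ∈ f.support.filter (fun x => x ∈ S), f x) ∧
    (∑ x ∈ f.support, f x) ≤ t

/-- The weak ε-net property: there is a function `g` bounding the transversal number of
every finite subfamily in terms of its fractional transversal number. -/
def WeakEpsNetProp (S : Set (Set X)) : Prop :=
  ∃ g : ℝ → ℕ, ∀ F : Finset (Set X), ↑F ⊆ S → ∀ t : ℝ,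
    FracTransversalLE F t → (∀ s : ℝ, FracTransversalLE F s → t ≤ s) →
    TransversalLE F (g t)

/-- The `(p,q)`-property: among any `p` members (with repetition allowed) some `q`
of them are intersecting. -/
def PQProperty (F : Finset (Set X)) (p q : ℕ) : Prop :=
  ∀ K : Fin p → Set X, (∀ i, K i ∈ F) →
    ∃ s : Finset (Fin p), s.card = q ∧ ∃ x, ∀ i ∈ s, x ∈ K i

/-- A compact set system: every subsystem with empty total intersection contains a
finite subfamily with empty intersection. -/
def CompactSystem (S : Set (Set X)) : Prop :=
  ∀ T ⊆ S, ⋂₀ T = ∅ → ∃ F : Finset (Set X), ↑F ⊆ T ∧ ⋂₀ (↑F : Set (Set X)) = ∅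

/-- The VC-dimension of `S` is at most `d`: every finite set shattered by `S` has
size at most `d`. -/
def VCDimLE (S : Set (Set X)) (d : ℕ) : Prop :=
  ∀ Y : Finset X, (∀ Z ⊆ Y, ∃ K ∈ S, (↑Y : Set X) ∩ K = ↑Z) → Y.card ≤ d

/-- `S^∩`: all intersections of nonempty subcollections of `S`. -/
def interClosure (S : Set (Set X)) : Set (Set X) :=
  {T | ∃ D ⊆ S, D.Nonempty ∧ T = ⋂₀ D}

end SetSystems

section Hypergraphs

variable {V : Type*} [DecidableEq V]

/-- An independent set of the hypergraph with edge set `E`: contains no edge. -/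
def IsIndep (E : Finset (Finset V)) (I : Set V) : Prop :=
  ∀ e ∈ E, ¬ ((↑e : Set V) ⊆ I)

/-- A maximal independent set. -/
def IsMaxIndep (E : Finset (Finset V)) (I : Set V) : Prop :=
  IsIndep E I ∧ ∀ J : Set V, IsIndep E J → I ⊆ J → J = I

/-- The ground set of the associated convexity space: the maximal independent sets. -/
abbrev MIS (E : Finset (Finset V)) : Type _ := {σ : Set V // IsMaxIndep E σ}

/-- `S_W`: the maximal independent sets containing `W`. -/
def SW (E : Finset (Finset V)) (W : Set V) : Set (MIS E) :=
  {σ : MIS E | W ⊆ σ.1}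

/-- The associated convexity space of the hypergraph with edge set `E`. -/
def assocC (E : Finset (Finset V)) : Set (Set (MIS E)) :=
  {T | ∃ W : Set V, T = SW E W}

/-- Property `T_k(m)`: among any `m` (not necessarily distinct) edges, some `k` of them
admit a system of distinct representatives which is an edge. -/
def PropT (E : Finset (Finset V)) (k m : ℕ) : Prop :=
  ∀ e : Fin m → Finset V, (∀ i, e i ∈ E) →
    ∃ (g : Fin k → Fin m) (v : Fin k → V), StrictMono g ∧ Function.Injective v ∧
      (∀ j, v j ∈ e (g j)) ∧ Finset.image v Finset.univ ∈ E

/-- The chromatic number of the hypergraph is at most `n`: the vertex set can be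
partitioned into (at most) `n` independent sets. -/
def ChromaticLE (E : Finset (Finset V)) (n : ℕ) : Prop :=
  ∃ P : Fin n → Set V, (∀ v : V, ∃! i, v ∈ P i) ∧
    ∀ i, (P i).Nonempty → IsIndep E (P i)

/-- The clique number is at most `w`: every set of vertices all of whose `k`-element
subsets are edges has size at most `w`. -/
def CliqueNumLE (E : Finset (Finset V)) (k w : ℕ) : Prop :=
  ∀ Q : Finset V, (∀ q ⊆ Q, q.card = k → q ∈ E) → Q.card ≤ w

/-- Property `δ_k(m)`: any sunflower of `m` edges contains `k` edges admitting a system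
of distinct representatives which is an edge. -/
def PropDelta (E : Finset (Finset V)) (k m : ℕ) : Prop :=
  ∀ G : Finset (Finset V), G ⊆ E → G.card = m →
    (∃ S : Finset V, ∀ e ∈ G, ∀ e' ∈ G, e ≠ e' → e ∩ e' = S) →
    ∃ (f : Fin k → Finset V) (v : Fin k → V), Function.Injective f ∧ (∀ j, f j ∈ G) ∧
      Function.Injective v ∧ (∀ j, v j ∈ f j) ∧ Finset.image v Finset.univ ∈ E

end Hypergraphs

/-!
Sunflowers. A long list of edges either repeats one edge `k` times or contains, by the
sunflower lemma, a sunflower of `m` edges; hence `δ_k(m)` implies `T_k(t)`.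

Bounded chromatic number. Call sets of vertices compatible if their union is independent; property
`T_k(t)` is then a colourful Helly theorem for this notion, and it implies a fractional one. If
`ω(H) ≤ w`, then by Ramsey's theorem a positive proportion of the `t`-tuples of vertices are
independent, so under any weighting of the vertices some independent set carries a positive
proportion `β` of the total weight. By the multiplicative weights method this yields a finite
family of independent sets such that every vertex lies in a proportion `β / 4` of its members. It is
condensed into boundedly many independent sets as in the construction of weak `ε`-nets: as long as
some vertex is uncovered, the family members containing it produce a new independent set which
contains the intersections of a positive proportion of the tuples of members, and these tuples are
different for different steps.
-/

open scoped Finset Nat BigOperators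

section Sunflowers

variable {α V : Type*} [DecidableEq V]

theorem exists_maximal_pairwiseDisjoint (s : Finset α) (f : α → Finset V) :
    ∃ D ⊆ s, (D : Set α).PairwiseDisjoint f ∧
      ∀ a ∈ s, (f a).Nonempty → ¬Disjoint (f a) (D.biUnion f) := by
  obtain ⟨D, hD, hmax⟩ :=
    (s.powerset.filter fun D : Finset α => (D : Set α).PairwiseDisjoint f).exists_maximal
      ⟨∅, by simp⟩
  obtain ⟨hDs, hdisj⟩ : D ⊆ s ∧ (D : Set α).PairwiseDisjoint f := by simpa using hD
  refine ⟨D, hDs, hdisj, fun a ha hne hmeet => ?_⟩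
  have hinsert : insert a D ⊆ D := by
    refine hmax ?_ (Finset.subset_insert a D)
    refine Finset.mem_filter.2 ⟨Finset.mem_powerset.2 (Finset.insert_subset ha hDs), ?_⟩
    rw [Finset.coe_insert]
    refine hdisj.insert fun b hb _ => ?_
    exact hmeet.mono_right (Finset.subset_biUnion_of_mem f hb)
  have haD : a ∈ D := hinsert (Finset.mem_insert_self a D)
  exact hne.ne_empty (Finset.disjoint_self_iff_empty _ |>.1
    (hmeet.mono_right (Finset.subset_biUnion_of_mem f haD)))

/-- A family of finite sets is a sunflower if all pairwise intersections of its members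
coincide; this is the shape in which sunflowers appear in `PropDelta`. -/
def IsSunflower (G : Finset (Finset V)) : Prop :=
  ∃ S : Finset V, ∀ e ∈ G, ∀ e' ∈ G, e ≠ e' → e ∩ e' = S

theorem IsSunflower.mono {G H : Finset (Finset V)} (hH : IsSunflower H) (h : G ⊆ H) :
    IsSunflower G :=
  hH.imp fun _ hS e he e' he' => hS e (h he) e' (h he')

theorem IsSunflower.of_pairwiseDisjoint {G : Finset (Finset V)}
    (h : (G : Set (Finset V)).PairwiseDisjoint id) : IsSunflower G :=
  ⟨∅, fun _ he _ he' hne => Finset.disjoint_iff_inter_eq_empty.1 (h he he' hne)⟩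

theorem IsSunflower.image_insert {G : Finset (Finset V)} (hG : IsSunflower G) (x : V) :
    IsSunflower (G.image (insert x)) := by
  obtain ⟨S, hS⟩ := hG
  refine ⟨insert x S, ?_⟩
  simp only [Finset.forall_mem_image]
  intro e he e' he' hne
  rw [← Finset.insert_inter_distrib, hS e he e' he' (ne_of_apply_ne _ hne)]

theorem exists_sunflower_of_image_erase {F : Finset (Finset V)} {x : V} (hx : ∀ e ∈ F, x ∈ e)
    {m : ℕ} (h : ∃ G ⊆ F.image (fun e => e.erase x), #G = m ∧ IsSunflower G) :
    ∃ G ⊆ F, #G = m ∧ IsSunflower G := by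
  obtain ⟨G, hGF, hGm, hG⟩ := h
  have hxG : ∀ e ∈ G, x ∉ e := fun e he => by
    obtain ⟨a, -, rfl⟩ := Finset.mem_image.1 (hGF he)
    exact Finset.notMem_erase x a
  refine ⟨G.image (insert x), ?_, ?_, hG.image_insert x⟩
  · refine (Finset.image_subset_image hGF).trans (Finset.image_subset_iff.2 ?_)
    simp only [Finset.forall_mem_image]
    intro e he
    rwa [Finset.insert_erase (hx e he)]
  · rwa [Finset.card_image_of_injOn (Finset.insert_erase_invOn.2.injOn.mono hxG)]

theorem exists_lt_card_filter_mem {F : Finset (Finset V)} {U : Finset V} {n : ℕ}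
    (hU : ∀ e ∈ F, ¬Disjoint e U) (hn : #U * n < #F) :
    ∃ x, n < #{e ∈ F | x ∈ e} := by
  have hhit : ∀ e ∈ F, ∃ x ∈ U, x ∈ e := fun e he => by
    obtain ⟨x, hxe, hxU⟩ := Finset.not_disjoint_iff.1 (hU e he)
    exact ⟨x, hxU, hxe⟩
  have : Nonempty V := by
    obtain ⟨e, he⟩ : F.Nonempty := Finset.card_pos.1 (Nat.zero_lt_of_lt hn)
    exact (hhit e he).nonempty
  choose! p hpU hp using hhit
  obtain ⟨x, -, hx⟩ := Finset.exists_lt_card_fiber_of_mul_lt_card_of_maps_to hpU hn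
  refine ⟨x, hx.trans_le (Finset.card_le_card fun e he => ?_)⟩
  obtain ⟨heF, rfl⟩ := Finset.mem_filter.1 he
  exact Finset.mem_filter.2 ⟨heF, hp e heF⟩

/-- The Erdős–Rado sunflower lemma. -/
theorem exists_sunflower {m k : ℕ} {F : Finset (Finset V)} (hF : ∀ e ∈ F, #e = k)
    (h : k ! * (m - 1) ^ k < #F) : ∃ G ⊆ F, #G = m ∧ IsSunflower G := by
  induction k generalizing F with
  | zero =>
    have hF' : F ⊆ {∅} := fun e he => by simpa using hF e he
    have hle : #F ≤ 1 := Finset.card_le_card hF'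
    rw [Nat.factorial_zero, pow_zero, one_mul] at h
    omega
  | succ k ih =>
    obtain ⟨D, hDF, hdisj, hmeet⟩ := exists_maximal_pairwiseDisjoint F id
    obtain hm | hm := le_or_gt m #D
    · obtain ⟨G, hGD, hGm⟩ := Finset.exists_subset_card_eq hm
      exact ⟨G, hGD.trans hDF, hGm, (IsSunflower.of_pairwiseDisjoint hdisj).mono hGD⟩
    have hcard : #(D.biUnion id) * (k ! * (m - 1) ^ k) < #F := calc
      _ ≤ ((m - 1) * (k + 1)) * (k ! * (m - 1) ^ k) := by
        gcongr
        exact (Finset.card_biUnion_le_card_mul _ _ _ fun e he => (hF e (hDF he)).le).trans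
          (by gcongr; omega)
      _ = (k + 1)! * (m - 1) ^ (k + 1) := by rw [Nat.factorial_succ]; ring
      _ < #F := h
    have hne : ∀ e ∈ F, e.Nonempty := fun e he => Finset.card_pos.1 (by rw [hF e he]; omega)
    obtain ⟨x, hx⟩ := exists_lt_card_filter_mem (fun e he => hmeet e he (hne e he)) hcard
    have hlink : ∀ e ∈ F.filter (x ∈ ·), x ∈ e := fun e he => (Finset.mem_filter.1 he).2
    have hsub : F.filter (x ∈ ·) ⊆ F := Finset.filter_subset _ _
    obtain ⟨G, hG⟩ := exists_sunflower_of_image_erase hlink (m := m) <| ih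
      (by
        simp only [Finset.forall_mem_image]
        intro e he
        rw [Finset.card_erase_of_mem (hlink e he), hF e (hsub he), Nat.add_sub_cancel])
      (by rwa [Finset.card_image_of_injOn ((Finset.erase_injOn' x).mono hlink)])
    exact ⟨G, hG.1.trans hsub, hG.2⟩

end Sunflowers

section SunflowerToTransversal

variable {V : Type*} [DecidableEq V] {E : Finset (Finset V)} {k m : ℕ}

theorem exists_strictMono_representatives {e : Fin m → Finset V} {g : Fin k → Fin m}
    {v : Fin k → V} (hg : g.Injective) (hv : v.Injective) (hve : ∀ j, v j ∈ e (g j))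
    (hE : Finset.univ.image v ∈ E) :
    ∃ (g : Fin k → Fin m) (v : Fin k → V), StrictMono g ∧ v.Injective ∧
      (∀ j, v j ∈ e (g j)) ∧ Finset.univ.image v ∈ E := by
  refine ⟨g ∘ Tuple.sort g, v ∘ Tuple.sort g,
    (Tuple.monotone_sort g).strictMono_of_injective (hg.comp (Equiv.injective _)),
    hv.comp (Equiv.injective _), fun j => hve _, ?_⟩
  rwa [← Finset.image_image, Finset.image_univ_equiv]

theorem exists_injective_image_univ_eq {s : Finset V} (hs : #s = k) :
    ∃ v : Fin k → V, v.Injective ∧ Finset.univ.image v = s := by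
  refine ⟨fun j => (s.equivFinOfCardEq hs).symm j,
    Subtype.val_injective.comp (Equiv.injective _), ?_⟩
  ext x
  simp only [Finset.mem_image, Finset.mem_univ, true_and]
  exact ⟨fun ⟨j, hj⟩ => hj ▸ Subtype.prop _, fun hx => ⟨s.equivFinOfCardEq hs ⟨x, hx⟩, by simp⟩⟩

theorem exists_injective_fiber {α : Type*} [DecidableEq α] {e : Fin m → α}
    (h : #(Finset.univ.image e) * k < m) :
    ∃ (g : Fin k → Fin m) (x : α), x ∈ Set.range e ∧ g.Injective ∧ ∀ j, e (g j) = x := by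
  obtain ⟨x, hx, hk⟩ := Finset.exists_lt_card_fiber_of_mul_lt_card_of_maps_to
    (s := Finset.univ) (n := k) (fun i _ => Finset.mem_image_of_mem e (Finset.mem_univ i))
    (by rwa [Finset.card_univ, Fintype.card_fin])
  obtain ⟨s, hs, hsk⟩ := Finset.exists_subset_card_eq hk.le
  obtain ⟨g, hg, rfl⟩ := exists_injective_image_univ_eq hsk
  refine ⟨g, x, by simpa using hx, hg, fun j => ?_⟩
  exact (Finset.mem_filter.1 (hs (Finset.mem_image_of_mem g (Finset.mem_univ j)))).2

/-- Among so many edges either one edge is repeated `k` times, and then its own vertices form a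
system of representatives, or there is a sunflower of `m` distinct ones. -/
theorem PropDelta.propT (hE : ∀ e ∈ E, #e = k) (h : PropDelta E k m) :
    PropT E k ((k ! * (m - 1) ^ k + 1) * k + 1) := by
  intro e he
  obtain hfew | hmany := le_or_gt #(Finset.univ.image e) (k ! * (m - 1) ^ k)
  · obtain ⟨g, x, ⟨i, rfl⟩, hg, hgx⟩ := exists_injective_fiber (e := e) (k := k)
      (Nat.lt_succ_of_le (Nat.mul_le_mul_right k (hfew.trans (Nat.le_succ _))))
    obtain ⟨v, hv, hvx⟩ := exists_injective_image_univ_eq (hE _ (he i))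
    refine exists_strictMono_representatives hg hv (fun j => ?_) (hvx ▸ he i)
    rw [hgx, ← hvx]
    exact Finset.mem_image_of_mem v (Finset.mem_univ j)
  · have himage : Finset.univ.image e ⊆ E := Finset.image_subset_iff.2 fun i _ => he i
    obtain ⟨G, hGe, hGm, hG⟩ := exists_sunflower (fun a ha => hE a (himage ha)) hmany
    obtain ⟨f, v, hf, hfG, hv, hvf, hvE⟩ := h G (hGe.trans himage) hGm hG
    have hrange : ∀ j, ∃ i, e i = f j := fun j => by simpa using hGe (hfG j)
    choose g hg using hrange
    refine exists_strictMono_representatives (g := g) ?_ hv (fun j => hg j ▸ hvf j) hvE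
    exact Function.Injective.of_comp (f := e) (by rwa [show e ∘ g = f from funext hg])

end SunflowerToTransversal

section Ramsey

variable {α : Type*}

theorem exists_insert_monochromatic [DecidableEq α] {k a : ℕ} {p : Finset α → Prop} {x : α}
    {Y : Finset α} (hx : x ∉ Y) (hY : ∀ s ⊆ Y, #s = k → p (insert x s))
    (h : ∃ S ⊆ Y, #S = a ∧ ∀ s ⊆ S, #s = k + 1 → p s) :
    ∃ S ⊆ insert x Y, #S = a + 1 ∧ ∀ s ⊆ S, #s = k + 1 → p s := by
  obtain ⟨S, hSY, hSa, hS⟩ := h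
  refine ⟨insert x S, Finset.insert_subset_insert x hSY, ?_, fun s hs hsk => ?_⟩
  · rw [Finset.card_insert_of_notMem (fun h => hx (hSY h)), hSa]
  by_cases hxs : x ∈ s
  · rw [← Finset.insert_erase hxs]
    refine hY _ ((Finset.subset_insert_iff.1 hs).trans hSY) ?_
    rw [Finset.card_erase_of_mem hxs, hsk, Nat.add_sub_cancel]
  · exact hS s ((Finset.subset_insert_iff_of_notMem hxs).1 hs) hsk

end Ramsey

/-- `IsRamsey k a b R` says that every red-blue colouring of the `k`-subsets of an `R`-element set
has a red clique on `a` points or a blue one on `b` points. The red sets are those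
satisfying `p`. -/
def IsRamsey (k a b R : ℕ) : Prop :=
  ∀ (α : Type u) (p : Finset α → Prop) (X : Finset α), R ≤ #X →
    (∃ S ⊆ X, #S = a ∧ ∀ s ⊆ S, #s = k → p s) ∨ ∃ S ⊆ X, #S = b ∧ ∀ s ⊆ S, #s = k → ¬p s

theorem IsRamsey.mono {k a b R R' : ℕ} (h : IsRamsey.{u} k a b R) (hR : R ≤ R') :
    IsRamsey.{u} k a b R' := fun α p X hX => h α p X (hR.trans hX)

theorem isRamsey_zero (a b : ℕ) : IsRamsey.{u} 0 a b (a + b) := by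
  intro α p X hX
  simp only [Finset.card_eq_zero]
  by_cases h : p ∅
  · obtain ⟨S, hS, hSa⟩ := Finset.exists_subset_card_eq (show a ≤ #X by omega)
    exact .inl ⟨S, hS, hSa, fun s _ hs => hs ▸ h⟩
  · obtain ⟨S, hS, hSb⟩ := Finset.exists_subset_card_eq (show b ≤ #X by omega)
    exact .inr ⟨S, hS, hSb, fun s _ hs => hs ▸ h⟩

theorem isRamsey_succ_zero_left (k b : ℕ) : IsRamsey.{u} (k + 1) 0 b 0 := fun _ _ X _ =>
  .inl ⟨∅, X.empty_subset, rfl, fun s hs hsk => by simp [Finset.subset_empty.1 hs] at hsk⟩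

theorem isRamsey_succ_zero_right (k a : ℕ) : IsRamsey.{u} (k + 1) a 0 0 := fun _ _ X _ =>
  .inr ⟨∅, X.empty_subset, rfl, fun s hs hsk => by simp [Finset.subset_empty.1 hs] at hsk⟩

/-- Fix a point `x` and colour the `k`-sets of the remaining points by the colour they receive
together with `x`. -/
theorem IsRamsey.succ {k a b R₁ R₂ R : ℕ} (h₁ : IsRamsey.{u} (k + 1) a (b + 1) R₁)
    (h₂ : IsRamsey.{u} (k + 1) (a + 1) b R₂) (h : IsRamsey.{u} k R₁ R₂ R) :
    IsRamsey.{u} (k + 1) (a + 1) (b + 1) (R + 1) := by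
  intro α p X hX
  obtain ⟨x, hx⟩ : X.Nonempty := Finset.card_pos.1 (by omega)
  have hsub : ∀ Y ⊆ X.erase x, Y ⊆ X := fun Y hY => hY.trans (X.erase_subset x)
  have hinsert : ∀ Y ⊆ X.erase x, insert x Y ⊆ X := fun Y hY =>
    Finset.insert_subset hx (hsub Y hY)
  obtain ⟨Y, hYX, hYR, hY⟩ | ⟨Y, hYX, hYR, hY⟩ := h α (fun s => p (insert x s)) (X.erase x)
    (by rw [Finset.card_erase_of_mem hx]; omega)
  all_goals have hxY : x ∉ Y := fun hxY => Finset.notMem_erase x X (hYX hxY)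
  · obtain hred | ⟨S, hSY, hS⟩ := h₁ α p Y hYR.ge
    · obtain ⟨S, hSY, hS⟩ := exists_insert_monochromatic hxY hY hred
      exact .inl ⟨S, hSY.trans (hinsert Y hYX), hS⟩
    · exact .inr ⟨S, hSY.trans (hsub Y hYX), hS⟩
  · obtain ⟨S, hSY, hS⟩ | hblue := h₂ α p Y hYR.ge
    · exact .inl ⟨S, hSY.trans (hsub Y hYX), hS⟩
    · obtain ⟨S, hSY, hS⟩ := exists_insert_monochromatic hxY hY hblue
      exact .inr ⟨S, hSY.trans (hinsert Y hYX), hS⟩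

/-- Ramsey's theorem for two-coloured `k`-uniform hypergraphs. -/
theorem exists_isRamsey (k : ℕ) : ∀ a b, ∃ R, IsRamsey.{u} k a b R := by
  induction k with
  | zero => exact fun a b => ⟨a + b, isRamsey_zero a b⟩
  | succ k ihk =>
    intro a
    induction a with
    | zero => exact fun b => ⟨0, isRamsey_succ_zero_left k b⟩
    | succ a iha =>
      intro b
      induction b with
      | zero => exact ⟨0, isRamsey_succ_zero_right k (a + 1)⟩
      | succ b ihb =>
        obtain ⟨R₁, h₁⟩ := iha (b + 1)
        obtain ⟨R₂, h₂⟩ := ihb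
        obtain ⟨R, hR⟩ := ihk R₁ R₂
        exact ⟨R + 1, h₁.succ h₂ hR⟩

section Frequencies

variable {α β : Type*} [Fintype α] [Fintype β]

/-- The proportion of the elements of a finite type satisfying `P`, that is the probability of
`P` under the uniform distribution; it is `0` when the type is empty. -/
noncomputable def freq (P : α → Prop) : ℝ := 𝔼 a, if P a then 1 else 0

theorem freq_eq_card_div (P : α → Prop) [DecidablePred P] :
    freq P = #{a | P a} / Fintype.card α := by
  rw [freq, Fintype.expect_eq_sum_div_card, ← Finset.sum_boole]
  congr!

theorem freq_nonneg (P : α → Prop) : 0 ≤ freq P :=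
  Finset.expect_nonneg fun a _ => by positivity

theorem freq_mono {P Q : α → Prop} (h : ∀ a, P a → Q a) : freq P ≤ freq Q :=
  Finset.expect_le_expect fun a _ => by
    have := h a
    split_ifs <;> simp_all

theorem freq_le_one (P : α → Prop) : freq P ≤ 1 := by
  rw [freq_eq_card_div]
  exact div_le_one_of_le₀ (mod_cast Finset.card_le_univ _) (Nat.cast_nonneg _)

theorem exists_of_freq_pos {P : α → Prop} (h : 0 < freq P) : ∃ a, P a := by
  obtain ⟨a, -, ha⟩ := Finset.exists_ne_zero_of_expect_ne_zero h.ne'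
  exact ⟨a, by simpa using ha⟩

theorem freq_or {P Q : α → Prop} (h : ∀ a, P a → ¬Q a) :
    freq (fun a => P a ∨ Q a) = freq P + freq Q := by
  rw [freq, freq, freq, ← Finset.expect_add_distrib]
  refine Finset.expect_congr rfl fun a _ => ?_
  by_cases hP : P a <;> simp [hP, h a]

theorem freq_comp_equiv (e : α ≃ β) (P : β → Prop) : freq (fun a => P (e a)) = freq P :=
  Fintype.expect_equiv e _ _ fun _ => rfl

theorem freq_comp_fst [Nonempty β] (P : α → Prop) : freq (fun p : α × β => P p.1) = freq P := by
  rw [freq, ← Finset.univ_product_univ, Finset.expect_product, freq]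
  exact Finset.expect_congr rfl fun a _ => Fintype.expect_const (if P a then (1 : ℝ) else 0)

theorem freq_comp_le {f : α → β} (hf : f.Injective) (P : β → Prop) :
    Fintype.card α * freq (fun a => P (f a)) ≤ Fintype.card β * freq P := by
  rw [freq, freq, Fintype.card_mul_expect, Fintype.card_mul_expect, Finset.sum_boole,
    Finset.sum_boole]
  exact_mod_cast Finset.card_le_card_of_injOn f (by simp [Set.MapsTo]) hf.injOn

/-- The union bound. -/
theorem exists_inv_card_le_freq [Nonempty α] {P : β → α → Prop}
    (h : ∀ a, ∃ b, P b a) : ∃ b, (Fintype.card β : ℝ)⁻¹ ≤ freq (P b) := by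
  have : Nonempty β := (h (Classical.arbitrary α)).nonempty
  suffices hexp : (Fintype.card β : ℝ)⁻¹ ≤ 𝔼 b, freq (P b) by
    simpa using Finset.exists_le_of_le_expect Finset.univ_nonempty hexp
  simp only [freq]
  rw [Finset.expect_comm]
  refine Finset.le_expect Finset.univ_nonempty fun a _ => ?_
  obtain ⟨b, hb⟩ := h a
  rw [Fintype.expect_eq_sum_div_card, inv_eq_one_div]
  gcongr
  exact (if_pos hb).ge.trans (Finset.single_le_sum (f := fun b => if P b a then (1 : ℝ) else 0)
    (fun b _ => by positivity) (Finset.mem_univ b))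

/-- Markov's inequality. -/
theorem mul_freq_le_expect {f : α → ℝ} (hf : ∀ a, 0 ≤ f a) (c : ℝ) :
    c * freq (fun a => c ≤ f a) ≤ 𝔼 a, f a := by
  rw [freq, Finset.mul_expect]
  refine Finset.expect_le_expect fun a _ => ?_
  split_ifs with h
  · rwa [mul_one]
  · rw [mul_zero]
    exact hf a

theorem half_le_freq_of_le_expect [Nonempty α] {f : α → ℝ} (hf : ∀ a, f a ≤ 1) {c : ℝ}
    (hc : 0 ≤ c) (h : c ≤ 𝔼 a, f a) : c / 2 ≤ freq (fun a => c / 2 ≤ f a) := by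
  have hle : ∀ a, f a ≤ (if c / 2 ≤ f a then 1 else 0) + c / 2 := fun a => by
    split_ifs with h
    · linarith [hf a]
    · linarith
  have hsum : c ≤ freq (fun a => c / 2 ≤ f a) + c / 2 := calc
    c ≤ 𝔼 a, ((if c / 2 ≤ f a then 1 else 0) + c / 2) :=
      h.trans (Finset.expect_le_expect fun a _ => hle a)
    _ = freq (fun a => c / 2 ≤ f a) + c / 2 := by
      rw [Finset.expect_add_distrib, Fintype.expect_const, freq]
  linarith

section Functions

variable {J K T : Type*} [Fintype J] [Fintype K] [Fintype T] [DecidableEq J] [DecidableEq K]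

theorem freq_comp_injective [Nonempty T] {a : K → J} (ha : a.Injective) (P : (K → T) → Prop) :
    freq (fun f : J → T => P (f ∘ a)) = freq P := by
  let e := Equiv.piEquivPiSubtypeProd (· ∈ Set.range a) fun _ => T
  let r : ({x // x ∈ Set.range a} → T) ≃ (K → T) :=
    (Equiv.ofInjective a ha).symm.arrowCongr (Equiv.refl T)
  calc freq (fun f : J → T => P (f ∘ a))
      = freq (fun p : ({x // x ∈ Set.range a} → T) × ({x // x ∉ Set.range a} → T) => P (r p.1)) :=
        freq_comp_equiv e fun p => P (r p.1)
    _ = freq (fun g : {x // x ∈ Set.range a} → T => P (r g)) :=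
        freq_comp_fst (fun g => P (r g))
    _ = freq P := freq_comp_equiv r P

theorem freq_comp_eval [Nonempty T] (j : J) (P : T → Prop) :
    freq (fun f : J → T => P (f j)) = freq P :=
  (freq_comp_injective (a := fun _ : Unit => j) (Function.injective_of_subsingleton _)
    fun g => P (g ())).trans (freq_comp_equiv (Equiv.funUnique Unit T) P)

theorem freq_eq_expect_update (j : J) (P : (J → T) → Prop) :
    freq P = 𝔼 F : J → T, freq fun y => P (Function.update F j y) := by
  obtain hT | hT := isEmpty_or_nonempty T
  · have := Function.isEmpty (fun F : J → T => F j)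
    simp [freq]
  let swap : (J → T) × T → (J → T) × T := fun p => (Function.update p.1 j p.2, p.1 j)
  have hswap : swap.Involutive := fun p => by simp [swap]
  calc freq P
      = freq (fun p : (J → T) × T => P p.1) := (freq_comp_fst P).symm
    _ = freq (fun p : (J → T) × T => P (Function.update p.1 j p.2)) :=
        (freq_comp_equiv hswap.toPerm fun p => P p.1).symm
    _ = 𝔼 F : J → T, freq fun y => P (Function.update F j y) := by
        rw [freq, ← Finset.univ_product_univ, Finset.expect_product]
        rfl

theorem freq_forall_and (S : T → Prop) (P : (J → T) → Prop) :
    freq (fun y : J → T => (∀ j, S (y j)) ∧ P y) =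
      freq S ^ Fintype.card J * freq (fun y : J → {a // S a} => P fun j => y j) := by
  have hcard : #{y : J → T | (∀ j, S (y j)) ∧ P y} = #{y : J → {a // S a} | P fun j => y j} := by
    refine Finset.card_bij' (fun y hy j => ⟨y j, (Finset.mem_filter.1 hy).2.1 j⟩)
      (fun y _ j => y j) ?_ ?_ ?_ ?_ <;> simp +contextual [Subtype.prop]
  have hle : #{y : J → {a // S a} | P fun j => y j} ≤ Fintype.card {a // S a} ^ Fintype.card J :=
    (Finset.card_le_univ _).trans Fintype.card_fun.le
  rw [freq_eq_card_div, freq_eq_card_div, freq_eq_card_div, hcard, Fintype.card_fun,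
    Fintype.card_fun, ← Fintype.card_subtype S, div_pow, Nat.cast_pow, Nat.cast_pow]
  obtain h | h := eq_or_ne ((Fintype.card {a // S a} : ℝ) ^ Fintype.card J) 0
  · have : #{y : J → {a // S a} | P fun j => y j} = 0 := Nat.le_zero.1 (hle.trans (mod_cast h.le))
    simp [this]
  · field_simp

end Functions

end Frequencies

section IndependentSets

variable {V ι κ : Type*} {E : Finset (Finset V)} {k m : ℕ}

theorem IsIndep.mono {A B : Set V} (hB : IsIndep E B) (h : A ⊆ B) : IsIndep E A :=
  fun e he heA => hB e he (heA.trans h)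

theorem not_isIndep_iff {A : Set V} : ¬IsIndep E A ↔ ∃ e ∈ E, (e : Set V) ⊆ A := by
  simp only [IsIndep, not_forall, not_not, exists_prop]

theorem isIndep_empty (hk : 0 < k) (hE : ∀ e ∈ E, #e = k) : IsIndep E ∅ := fun e he h => by
  rw [← hE e he, Finset.coe_eq_empty.1 (Set.subset_empty_iff.1 h)] at hk
  exact absurd hk (by simp)

theorem exists_tuple_not_isIndep (hE : ∀ e ∈ E, #e = k) {W : ι → Set V} {Z : Finset ι}
    (h : ¬IsIndep E (⋃ i ∈ Z, W i)) :
    ∃ y : Fin k → ι, (∀ j, y j ∈ Z) ∧ ¬IsIndep E (⋃ j, W (y j)) := by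
  obtain ⟨e, he, heW⟩ := not_isIndep_iff.1 h
  obtain ⟨v, -, rfl⟩ := exists_injective_image_univ_eq (hE e he)
  have hv : ∀ j, ∃ i ∈ Z, v j ∈ W i := fun j => by simpa using heW (by simp : v j ∈ _)
  choose y hyZ hy using hv
  refine ⟨y, hyZ, not_isIndep_iff.2 ⟨_, he, ?_⟩⟩
  rw [Finset.coe_image, Finset.coe_univ, Set.image_univ, Set.range_subset_iff]
  exact fun j => Set.mem_iUnion_of_mem j (hy j)

variable [DecidableEq V]

theorem PropT.exists_not_isIndep_iUnion (hT : PropT E k m) {A : Fin m → κ → Set V}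
    (hA : ∀ i, ¬IsIndep E (⋃ c, A i c)) :
    ∃ (a : Fin k → Fin m) (c : Fin k → κ), a.Injective ∧ ¬IsIndep E (⋃ j, A (a j) (c j)) := by
  simp only [not_isIndep_iff] at hA
  choose e heE heA using hA
  obtain ⟨a, v, ha, -, hv, hvE⟩ := hT e heE
  have hvA : ∀ j, ∃ c, v j ∈ A (a j) c := fun j => Set.mem_iUnion.1 (heA (a j) (hv j))
  choose c hc using hvA
  refine ⟨a, c, ha.injective, not_isIndep_iff.2 ⟨_, hvE, ?_⟩⟩
  rw [Finset.coe_image, Finset.coe_univ, Set.image_univ, Set.range_subset_iff]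
  exact fun j => Set.mem_iUnion_of_mem j (hc j)

/-- The colourful Helly theorem, with independence of the union in the role of intersection. -/
theorem PropT.exists_isIndep_iUnion [Nonempty κ] (hT : PropT E k m) {A : Fin m → κ → Set V}
    (hA : ∀ x : Fin m → κ, IsIndep E (⋃ i, A i (x i))) : ∃ i, IsIndep E (⋃ c, A i c) := by
  by_contra! hrow
  obtain ⟨a, c, ha, hdep⟩ := hT.exists_not_isIndep_iUnion hrow
  refine hdep ((hA (Function.extend a c fun _ => Classical.arbitrary κ)).mono ?_)
  refine Set.iUnion_subset fun j => Set.subset_iUnion_of_subset (a j) ?_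
  rw [ha.extend_apply]

end IndependentSets

section Supersaturation

variable {V ι : Type*} [Fintype ι] {E : Finset (Finset V)} {k m : ℕ} {W : ι → Set V}

theorem exists_disjoint_dependent_tuples (hk : 0 < k) (hE : ∀ e ∈ E, #e = k)
    (hW : ∀ Z : Finset ι, Fintype.card ι ≤ 2 * #Z → ¬IsIndep E (⋃ i ∈ Z, W i)) :
    ∃ D : Finset (Fin k → ι), (∀ y ∈ D, ¬IsIndep E (⋃ j, W (y j))) ∧
      (D : Set (Fin k → ι)).PairwiseDisjoint (Finset.univ.image ·) ∧
      Fintype.card ι ≤ 2 * k * #D := by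
  obtain ⟨D, hD, hdisj, hmeet⟩ := exists_maximal_pairwiseDisjoint
    {y : Fin k → ι | ¬IsIndep E (⋃ j, W (y j))} (Finset.univ.image ·)
  refine ⟨D, fun y hy => by simpa using hD hy, hdisj, ?_⟩
  set U := D.biUnion (Finset.univ.image ·)
  have hUk : #U ≤ #D * k := Finset.card_biUnion_le_card_mul _ _ _ fun y _ =>
    Finset.card_image_le.trans_eq (Finset.card_fin k)
  suffices hU : Fintype.card ι ≤ 2 * #U by
    calc Fintype.card ι ≤ 2 * #U := hU
      _ ≤ 2 * (#D * k) := by gcongr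
      _ = 2 * k * #D := by ring
  by_contra! hU
  obtain ⟨y, hyU, hy⟩ := exists_tuple_not_isIndep hE
    (hW Uᶜ (by rw [Finset.card_compl]; omega))
  have : Nonempty (Fin k) := Fin.pos_iff_nonempty.1 hk
  refine hmeet y (by simpa using hy) (Finset.univ_nonempty.image y) ?_
  exact Finset.disjoint_left.2 (Finset.forall_mem_image.2 fun j _ =>
    Finset.mem_compl.1 (hyU j))

variable [DecidableEq V]

theorem exists_inv_card_le_freq_dependent {T κ : Type*} [Fintype T] [Nonempty T] [Fintype κ]
    (hT : PropT E k m) {A : T → κ → Set V} (hA : ∀ t, ¬IsIndep E (⋃ c, A t c)) :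
    ∃ c : Fin k → κ, ((m * Fintype.card κ : ℝ) ^ k)⁻¹ ≤
      freq fun u : Fin k → T => ¬IsIndep E (⋃ j, A (u j) (c j)) := by
  have hcard : (Fintype.card ((Fin k → Fin m) × (Fin k → κ)) : ℝ) =
      (m * Fintype.card κ : ℝ) ^ k := by
    rw [Fintype.card_prod, Fintype.card_fun, Fintype.card_fun, Fintype.card_fin, Fintype.card_fin,
      Nat.cast_mul, Nat.cast_pow, Nat.cast_pow, mul_pow]
  obtain ⟨⟨a, c⟩, hac⟩ := exists_inv_card_le_freq
    (P := fun (p : (Fin k → Fin m) × (Fin k → κ)) (y : Fin m → T) =>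
      p.1.Injective ∧ ¬IsIndep E (⋃ j, A (y (p.1 j)) (p.2 j)))
    fun y => by
      obtain ⟨a, c, hac⟩ := hT.exists_not_isIndep_iUnion (A := fun i => A (y i)) fun i => hA (y i)
      exact ⟨(a, c), hac⟩
  have hpos : 0 < (Fintype.card ((Fin k → Fin m) × (Fin k → κ)) : ℝ)⁻¹ :=
    inv_pos.2 (Nat.cast_pos.2 (Fintype.card_pos_iff.2 ⟨(a, c)⟩))
  obtain ⟨-, ha, -⟩ := exists_of_freq_pos (hpos.trans_le hac)
  refine ⟨c, ?_⟩
  calc ((m * Fintype.card κ : ℝ) ^ k)⁻¹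
      ≤ freq fun y : Fin m → T => ¬IsIndep E (⋃ j, A (y (a j)) (c j)) := by
        rw [← hcard]
        exact hac.trans (freq_mono fun y hy => hy.2)
    _ = _ := freq_comp_injective ha fun u : Fin k → T => ¬IsIndep E (⋃ j, A (u j) (c j))

theorem card_pow_le_freq_dependent (hT : PropT E k m) {D : Finset (Fin k → ι)}
    (hDne : D.Nonempty) (hD : ∀ y ∈ D, ¬IsIndep E (⋃ j, W (y j)))
    (hdisj : (D : Set (Fin k → ι)).PairwiseDisjoint (Finset.univ.image ·)) :
    (#D : ℝ) ^ k * ((m * k : ℝ) ^ k)⁻¹ ≤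
      Fintype.card ι ^ k * freq fun y : Fin k → ι => ¬IsIndep E (⋃ j, W (y j)) := by
  have : Nonempty D := hDne.to_subtype
  obtain ⟨c, hc⟩ := exists_inv_card_le_freq_dependent hT (A := fun (y : D) j => W (y.1 j))
    fun y => hD y y.2
  have hinj : Function.Injective fun (u : Fin k → D) (j : Fin k) => (u j).1 (c j) := by
    intro u u' h
    funext j
    refine Subtype.ext (hdisj.elim (u j).2 (u' j).2 (Finset.not_disjoint_iff.2
      ⟨(u j).1 (c j), Finset.mem_image_of_mem _ (Finset.mem_univ _), ?_⟩))
    rw [show (u j).1 (c j) = (u' j).1 (c j) from congrFun h j]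
    exact Finset.mem_image_of_mem _ (Finset.mem_univ _)
  have hcomp := freq_comp_le hinj fun y : Fin k → ι => ¬IsIndep E (⋃ j, W (y j))
  rw [Fintype.card_fun, Fintype.card_fun, Fintype.card_fin, Fintype.card_coe, Nat.cast_pow,
    Nat.cast_pow] at hcomp
  rw [Fintype.card_fin] at hc
  exact (mul_le_mul_of_nonneg_left hc (pow_nonneg (Nat.cast_nonneg _) k)).trans hcomp

theorem le_freq_dependent (hk : 0 < k) (hE : ∀ e ∈ E, #e = k) (hT : PropT E k m)
    (hW : ∀ Z : Finset ι, Fintype.card ι ≤ 2 * #Z → ¬IsIndep E (⋃ i ∈ Z, W i)) :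
    ((2 * k * (m * k) : ℝ) ^ k)⁻¹ ≤ freq fun y : Fin k → ι => ¬IsIndep E (⋃ j, W (y j)) := by
  obtain ⟨D, hD, hdisj, hcard⟩ := exists_disjoint_dependent_tuples hk hE hW
  have : Nonempty ι := by
    obtain ⟨y, -⟩ := exists_tuple_not_isIndep hE (hW Finset.univ (by
      rw [Finset.card_univ]; omega))
    exact ⟨y ⟨0, hk⟩⟩
  have hn : 0 < (Fintype.card ι : ℝ) := Nat.cast_pos.2 Fintype.card_pos
  have hcard' : (Fintype.card ι : ℝ) ≤ 2 * k * #D := mod_cast hcard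
  have hDne : D.Nonempty := Finset.card_pos.1 (Nat.cast_pos.1 (by_contra fun h => by
    nlinarith [(Nat.cast_nonneg #D : (0 : ℝ) ≤ #D)] : 0 < (#D : ℝ)))
  refine le_of_mul_le_mul_left ?_ (pow_pos hn k)
  calc (Fintype.card ι : ℝ) ^ k * ((2 * k * (m * k) : ℝ) ^ k)⁻¹
      ≤ (2 * k * #D) ^ k * ((2 * k * (m * k) : ℝ) ^ k)⁻¹ := by gcongr
    _ = #D ^ k * ((m * k : ℝ) ^ k)⁻¹ := by
      rw [mul_pow, mul_pow (2 * k : ℝ) (m * k), mul_inv]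
      field_simp [hk.ne']
    _ ≤ _ := card_pow_le_freq_dependent hT hDne hD hdisj

theorem le_freq_forall_and_dependent (hk : 0 < k) (hE : ∀ e ∈ E, #e = k) (hT : PropT E k m)
    {S : ι → Prop}
    (hS : ∀ Z : Finset ι, freq S ≤ 2 * freq (· ∈ Z) → ¬IsIndep E (⋃ i ∈ Z, W i)) :
    freq S ^ k * ((2 * k * (m * k) : ℝ) ^ k)⁻¹ ≤
      freq fun y : Fin k → ι => (∀ j, S (y j)) ∧ ¬IsIndep E (⋃ j, W (y j)) := by
  rw [freq_forall_and, Fintype.card_fin]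
  refine mul_le_mul_of_nonneg_left (le_freq_dependent hk hE hT (W := fun i : {i // S i} => W i)
    fun Z hZ hind => ?_) (pow_nonneg (freq_nonneg S) k)
  refine hS (Z.map (Function.Embedding.subtype S)) ?_ ?_
  · rw [freq_eq_card_div, freq_eq_card_div, ← Fintype.card_subtype, Finset.filter_univ_mem,
      Finset.card_map, ← mul_div_assoc]
    gcongr
    exact_mod_cast hZ
  · simpa [Set.iUnion_subtype] using hind

end Supersaturation

section FractionalHelly

variable {V ι : Type*} {E : Finset (Finset V)} {W : ι → Set V} {k m : ℕ} {z : Fin k} {j : Fin m}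
  {F : Fin m → Fin k → ι} {y : Fin k → ι}

/-- Stage `j` of the proof of the fractional Helly theorem, which turns an array `F` with `m`
rows of length `k` into a counterexample to the colourful Helly theorem one row at a time: the
rows before `j` have a dependent union, whereas all transversals of `F` have an independent union,
provided that they use the column `z` in the rows from `j` on. -/
def IsStage (E : Finset (Finset V)) (W : ι → Set V) (z : Fin k) (j : ℕ) (F : Fin m → Fin k → ι) :
    Prop :=
  (∀ i : Fin m, i < j → ¬IsIndep E (⋃ q, W (F i q))) ∧
    ∀ c : Fin m → Fin k, (∀ i : Fin m, j ≤ i → c i = z) → IsIndep E (⋃ i, W (F i (c i)))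

theorem isStage_zero_iff : IsStage E W z 0 F ↔ IsIndep E (⋃ i, W (F i z)) := by
  refine ⟨fun h => h.2 (fun _ => z) fun _ _ => rfl, fun h => ⟨fun i hi => absurd hi (by simp), ?_⟩⟩
  intro c hc
  obtain rfl : c = fun _ => z := funext fun i => hc i (Nat.zero_le _)
  exact h

theorem IsStage.update_const (h : IsStage E W z j (Function.update F j y)) :
    IsStage E W z j (Function.update F j fun _ => y z) := by
  refine ⟨fun i hi => ?_, fun c hc => (h.2 c hc).mono (Set.iUnion_mono fun i => ?_)⟩
  · have hij : i ≠ j := (Fin.lt_def.2 hi).ne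
    simpa only [Function.update_of_ne hij] using h.1 i hi
  · obtain rfl | hij := eq_or_ne i j
    · simp [hc i le_rfl]
    · simp [Function.update_of_ne hij]

theorem isStage_succ_of_forall_update_const (hy : ¬IsIndep E (⋃ q, W (y q)))
    (h : ∀ q, IsStage E W z j (Function.update F j fun _ => y q)) :
    IsStage E W z (j + 1) (Function.update F j y) := by
  refine ⟨fun i hi => ?_, fun c hc => ?_⟩
  · obtain rfl | hij := eq_or_ne i j
    · simpa using hy
    · simpa only [Function.update_of_ne hij] using (h z).1 i
        ((Nat.lt_succ_iff.1 hi).lt_of_ne (Fin.val_ne_of_ne hij))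
  · refine ((h (c j)).2 (Function.update c j z) fun i hi => ?_).mono
      (Set.iUnion_mono fun i => ?_)
    · obtain rfl | hij := eq_or_ne i j
      · simp
      · rw [Function.update_of_ne hij, hc i (hi.lt_of_ne' (Fin.val_ne_of_ne hij))]
    · obtain rfl | hij := eq_or_ne i j
      · simp
      · simp [Function.update_of_ne hij]

theorem PropT.not_isStage [DecidableEq V] (hT : PropT E k m) : ¬IsStage E W z m F := by
  have : Nonempty (Fin k) := ⟨z⟩
  intro h
  obtain ⟨i, hi⟩ := hT.exists_isIndep_iUnion (A := fun i q => W (F i q)) fun x =>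
    h.2 x fun i hi => absurd i.2 (not_lt.2 hi)
  exact h.1 i i.2 hi

variable [Fintype ι]

theorem freq_isStage_zero [Nonempty ι] (E : Finset (Finset V)) (W : ι → Set V) (m : ℕ)
    (z : Fin k) : freq (fun F : Fin m → Fin k → ι => IsStage E W z 0 F) =
      freq fun f : Fin m → ι => IsIndep E (⋃ i, W (f i)) := by
  simp only [isStage_zero_iff]
  calc freq (fun F : Fin m → Fin k → ι => IsIndep E (⋃ i, W (F i z)))
      = freq fun f : Fin m × Fin k → ι => IsIndep E (⋃ i, W (f (i, z))) :=
        freq_comp_equiv (Equiv.curry (Fin m) (Fin k) ι).symm fun f =>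
          IsIndep E (⋃ i, W (f (i, z)))
    _ = _ := freq_comp_injective (a := fun i => (i, z)) (Prod.mk_left_injective z)
        fun f : Fin m → ι => IsIndep E (⋃ i, W (f i))

/-- A lower bound on the density of the `j`-th stage in the proof of the fractional Helly theorem,
if that of the initial stage is `α` and there is no large independent subfamily. -/
noncomputable def stageDensity (k m : ℕ) (α : ℝ) : ℕ → ℝ
  | 0 => α
  | j + 1 => ((2 * k * (m * k) : ℝ) ^ k)⁻¹ * (stageDensity k m α j / 2) ^ (k + 1)

theorem stageDensity_pos (hk : 0 < k) (hm : 0 < m) {α : ℝ} (hα : 0 < α) :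
    ∀ j, 0 < stageDensity k m α j
  | 0 => hα
  | j + 1 => by
    have := stageDensity_pos hk hm hα j
    rw [stageDensity]
    positivity

theorem antitone_stageDensity (hk : 0 < k) (hm : 0 < m) {α : ℝ} (hα : 0 < α) (hα' : α ≤ 1) :
    Antitone (stageDensity k m α) := by
  have hQ : ((2 * k * (m * k) : ℝ) ^ k)⁻¹ ≤ 1 := mod_cast Nat.cast_inv_le_one _
  have hstep : ∀ j, stageDensity k m α j ≤ 1 →
      stageDensity k m α (j + 1) ≤ stageDensity k m α j := fun j hj => by
    have hpos := stageDensity_pos hk hm hα j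
    calc stageDensity k m α (j + 1)
        ≤ 1 * (stageDensity k m α j / 2) ^ (k + 1) :=
          mul_le_mul_of_nonneg_right hQ (by positivity)
      _ ≤ stageDensity k m α j / 2 := by
          rw [one_mul]
          exact pow_le_of_le_one (by positivity) (by linarith) k.succ_ne_zero
      _ ≤ stageDensity k m α j := half_le_self hpos.le
  have hle : ∀ j, stageDensity k m α j ≤ 1 := fun j => by
    induction j with
    | zero => exact hα'
    | succ j ih => exact (hstep j ih).trans ih
  exact antitone_nat_of_succ_le fun j => hstep j (hle j)

theorem half_le_freq_update_isStage {c : ℝ} (hc : 0 < c)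
    (h : c ≤ freq fun F : Fin m → Fin k → ι => IsStage E W z j F) :
    c / 2 ≤ freq fun F : Fin m → Fin k → ι =>
      c / 2 ≤ freq fun x => IsStage E W z j (Function.update F j fun _ => x) := by
  obtain ⟨F₀, -⟩ := exists_of_freq_pos (hc.trans_le h)
  have : Nonempty ι := ⟨F₀ j z⟩
  refine half_le_freq_of_le_expect (fun F => freq_le_one _) hc.le (h.trans ?_)
  rw [freq_eq_expect_update j]
  refine Finset.expect_le_expect fun F _ => ?_
  calc freq (fun y => IsStage E W z j (Function.update F j y))
      ≤ freq fun y : Fin k → ι => IsStage E W z j (Function.update F j fun _ => y z) :=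
        freq_mono fun y hy => hy.update_const
    _ = _ := freq_comp_eval z fun x => IsStage E W z j (Function.update F j fun _ => x)

variable [DecidableEq V]

theorem le_freq_isStage_succ (hE : ∀ e ∈ E, #e = k) (hT : PropT E k m) {c : ℝ} (hc : 0 < c)
    (hW : ∀ I : Finset ι, c / 4 ≤ freq (· ∈ I) → ¬IsIndep E (⋃ i ∈ I, W i))
    (h : c ≤ freq fun F : Fin m → Fin k → ι => IsStage E W z j F) :
    ((2 * k * (m * k) : ℝ) ^ k)⁻¹ * (c / 2) ^ (k + 1) ≤
      freq fun F : Fin m → Fin k → ι => IsStage E W z (j + 1) F := by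
  have hrow : ∀ F : Fin m → Fin k → ι,
      c / 2 ≤ freq (fun x => IsStage E W z j (Function.update F j fun _ => x)) →
      (c / 2) ^ k * ((2 * k * (m * k) : ℝ) ^ k)⁻¹ ≤
        freq fun y => IsStage E W z (j + 1) (Function.update F j y) := fun F hF => by
    calc (c / 2) ^ k * ((2 * k * (m * k) : ℝ) ^ k)⁻¹
        ≤ freq (fun x => IsStage E W z j (Function.update F j fun _ => x)) ^ k *
            ((2 * k * (m * k) : ℝ) ^ k)⁻¹ := by gcongr
      _ ≤ _ := le_freq_forall_and_dependent z.pos hE hT fun Z hZ => hW Z (by linarith)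
      _ ≤ _ := freq_mono fun y hy => isStage_succ_of_forall_update_const hy.2 hy.1
  calc ((2 * k * (m * k) : ℝ) ^ k)⁻¹ * (c / 2) ^ (k + 1)
      = (c / 2) ^ k * ((2 * k * (m * k) : ℝ) ^ k)⁻¹ * (c / 2) := by ring
    _ ≤ (c / 2) ^ k * ((2 * k * (m * k) : ℝ) ^ k)⁻¹ * freq fun F : Fin m → Fin k → ι =>
          (c / 2) ^ k * ((2 * k * (m * k) : ℝ) ^ k)⁻¹ ≤
            freq fun y => IsStage E W z (j + 1) (Function.update F j y) :=
        mul_le_mul_of_nonneg_left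
          ((half_le_freq_update_isStage hc h).trans (freq_mono hrow)) (by positivity)
    _ ≤ _ := mul_freq_le_expect (fun F => freq_nonneg _) _
    _ = _ := (freq_eq_expect_update j _).symm

/-- The density of the independent subfamily provided by the fractional Helly theorem
`PropT.exists_le_freq_mem`. -/
noncomputable def fracHellyConst (k m : ℕ) (α : ℝ) : ℝ := stageDensity k m α m / 4

theorem fracHellyConst_pos (hk : 0 < k) (hm : 0 < m) {α : ℝ} (hα : 0 < α) :
    0 < fracHellyConst k m α :=
  div_pos (stageDensity_pos hk hm hα m) four_pos

/-- The fractional Helly theorem. -/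
theorem PropT.exists_le_freq_mem (hT : PropT E k m) (hk : 0 < k) (hm : 0 < m)
    (hE : ∀ e ∈ E, #e = k) {α : ℝ} (hα : 0 < α)
    (h : α ≤ freq fun f : Fin m → ι => IsIndep E (⋃ i, W (f i))) :
    ∃ I : Finset ι, fracHellyConst k m α ≤ freq (· ∈ I) ∧ IsIndep E (⋃ i ∈ I, W i) := by
  by_contra! hW
  obtain ⟨f, -⟩ := exists_of_freq_pos (hα.trans_le h)
  have : Nonempty ι := ⟨f ⟨0, hm⟩⟩
  let z : Fin k := ⟨0, hk⟩
  have hstage : ∀ j ≤ m, stageDensity k m α j ≤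
      freq fun F : Fin m → Fin k → ι => IsStage E W z j F := fun j => by
    induction j with
    | zero => exact fun _ => h.trans_eq (freq_isStage_zero E W m z).symm
    | succ j ih =>
      intro hj
      refine le_freq_isStage_succ (j := ⟨j, hj⟩) hE hT (stageDensity_pos hk hm hα j)
        (fun I hI => hW I (le_trans ?_ hI)) (ih (Nat.le_of_succ_le hj))
      have hα' : α ≤ 1 := h.trans (freq_le_one _)
      exact div_le_div_of_nonneg_right
        (antitone_stageDensity hk hm hα hα' (Nat.le_of_succ_le hj)) four_pos.le
  obtain ⟨F, hF⟩ := exists_of_freq_pos ((stageDensity_pos hk hm hα m).trans_le (hstage m le_rfl))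
  exact hT.not_isStage hF

end FractionalHelly

section WeakNets

variable {V A : Type*} [DecidableEq V] [Fintype A] {E : Finset (Finset V)} {k n : ℕ}
  {σ : A → Set V}

theorem PropT.exists_isIndep_iUnion_iInter (hT : PropT E k (n + 1))
    {τ : (Fin (n + 1) → Fin (n + 1)) → Set V} (hτ : ∀ x, IsIndep E (τ x)) :
    ∃ i : Fin (n + 1), IsIndep E (⋃ c, ⋂ d : Fin n → Fin (n + 1), τ (i.insertNth c d)) := by
  refine hT.exists_isIndep_iUnion fun x => (hτ x).mono (Set.iUnion_subset fun i => ?_)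
  refine (Set.iInter_subset _ (i.removeNth x)).trans_eq ?_
  rw [Fin.insertNth_self_removeNth]

theorem PropT.inv_le_freq_isIndep_iUnion_iInter [Nonempty A] (hT : PropT E k (n + 1))
    (hσ : ∀ a, IsIndep E (σ a)) :
    (n + 1 : ℝ)⁻¹ ≤ freq fun F : Fin (n + 1) → (Fin n → Fin (n + 1)) → A =>
      IsIndep E (⋃ c, ⋂ d, σ (F c d)) := by
  obtain ⟨i, hi⟩ := exists_inv_card_le_freq
    (P := fun (i : Fin (n + 1)) (f : (Fin (n + 1) → Fin (n + 1)) → A) =>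
      IsIndep E (⋃ c, ⋂ d : Fin n → Fin (n + 1), σ (f (i.insertNth c d))))
    fun f => hT.exists_isIndep_iUnion_iInter fun x => hσ (f x)
  let slices : ((Fin (n + 1) → Fin (n + 1)) → A) ≃
      (Fin (n + 1) → (Fin n → Fin (n + 1)) → A) :=
    ((Fin.insertNthEquiv (fun _ => Fin (n + 1)) i).symm.arrowCongr (Equiv.refl A)).trans
      (Equiv.curry _ _ _)
  rw [Fintype.card_fin, Nat.cast_succ] at hi
  exact hi.trans_eq (freq_comp_equiv slices fun F => IsIndep E (⋃ c, ⋂ d, σ (F c d)))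

theorem PropT.exists_le_freq_iInter_subset [Nonempty A] (hT : PropT E k (n + 1)) (hk : 0 < k)
    (hE : ∀ e ∈ E, #e = k) (hσ : ∀ a, IsIndep E (σ a)) :
    ∃ τ : Set V, IsIndep E τ ∧ fracHellyConst k (n + 1) (n + 1 : ℝ)⁻¹ ≤
      freq fun y : (Fin n → Fin (n + 1)) → A => ⋂ d, σ (y d) ⊆ τ := by
  let W : ((Fin n → Fin (n + 1)) → A) → Set V := fun y => ⋂ d, σ (y d)
  obtain ⟨I, hI, hind⟩ := hT.exists_le_freq_mem (W := W) hk n.succ_pos hE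
    (inv_pos.2 n.cast_add_one_pos) (hT.inv_le_freq_isIndep_iUnion_iInter hσ)
  exact ⟨_, hind, hI.trans (freq_mono fun y hy => Set.subset_biUnion_of_mem (u := W) hy)⟩

theorem PropT.exists_le_freq_forall_mem_and (hT : PropT E k (n + 1)) (hk : 0 < k)
    (hE : ∀ e ∈ E, #e = k) (hσ : ∀ a, IsIndep E (σ a)) {v : V}
    (hv : 0 < freq fun a => v ∈ σ a) :
    ∃ τ : Set V, IsIndep E τ ∧
      (freq fun a => v ∈ σ a) ^ (n + 1) ^ n * fracHellyConst k (n + 1) (n + 1 : ℝ)⁻¹ ≤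
        freq fun y : (Fin n → Fin (n + 1)) → A => (∀ d, v ∈ σ (y d)) ∧ ⋂ d, σ (y d) ⊆ τ := by
  obtain ⟨a, ha⟩ := exists_of_freq_pos hv
  have : Nonempty {a // v ∈ σ a} := ⟨a, ha⟩
  obtain ⟨τ, hτ, h⟩ := hT.exists_le_freq_iInter_subset hk hE
    (σ := fun a : {a // v ∈ σ a} => σ a) fun a => hσ a
  refine ⟨τ, hτ, ?_⟩
  rw [freq_forall_and (fun a => v ∈ σ a) fun y => ⋂ d, σ (y d) ⊆ τ, Fintype.card_fun,
    Fintype.card_fin, Fintype.card_fin]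
  exact mul_le_mul_of_nonneg_left h (pow_nonneg (freq_nonneg _) _)

/-- While some `v` is not covered, the independent set found for the members of `σ` containing `v`
captures tuples whose intersection contains `v`, so that none of them was captured before. -/
theorem PropT.exists_cover_or_le_freq (hT : PropT E k (n + 1)) (hk : 0 < k)
    (hE : ∀ e ∈ E, #e = k) (hσ : ∀ a, IsIndep E (σ a)) {ε : ℝ} (hε : 0 < ε) {U : Set V}
    (hU : ∀ v ∈ U, ε ≤ freq fun a => v ∈ σ a) (s : ℕ) :
    ∃ 𝓣 : Finset (Set V), (∀ τ ∈ 𝓣, IsIndep E τ) ∧ #𝓣 ≤ s ∧ ((∀ v ∈ U, ∃ τ ∈ 𝓣, v ∈ τ) ∨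
      s * (ε ^ (n + 1) ^ n * fracHellyConst k (n + 1) (n + 1 : ℝ)⁻¹) ≤
        freq fun y : (Fin n → Fin (n + 1)) → A => ∃ τ ∈ 𝓣, ⋂ d, σ (y d) ⊆ τ) := by
  have hβ := fracHellyConst_pos hk n.succ_pos (inv_pos.2 (n.cast_add_one_pos (α := ℝ)))
  induction s with
  | zero => exact ⟨∅, by simp, by simp, Or.inr (by simpa using freq_nonneg _)⟩
  | succ s ih =>
    obtain ⟨𝓣, h𝓣, hcard, hcov | hfreq⟩ := ih
    · exact ⟨𝓣, h𝓣, hcard.trans s.le_succ, Or.inl hcov⟩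
    by_cases hcov : ∀ v ∈ U, ∃ τ ∈ 𝓣, v ∈ τ
    · exact ⟨𝓣, h𝓣, hcard.trans s.le_succ, Or.inl hcov⟩
    push Not at hcov
    obtain ⟨v, hvU, hv⟩ := hcov
    obtain ⟨τ, hτ, hnew⟩ :=
      hT.exists_le_freq_forall_mem_and hk hE hσ (hε.trans_le (hU v hvU))
    refine ⟨insert τ 𝓣, Finset.forall_mem_insert _ _ _ |>.2 ⟨hτ, h𝓣⟩,
      (Finset.card_insert_le _ _).trans (Nat.succ_le_succ hcard), Or.inr ?_⟩
    calc ((s + 1 : ℕ) : ℝ) * (ε ^ (n + 1) ^ n * fracHellyConst k (n + 1) (n + 1 : ℝ)⁻¹)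
        = s * (ε ^ (n + 1) ^ n * fracHellyConst k (n + 1) (n + 1 : ℝ)⁻¹) +
            ε ^ (n + 1) ^ n * fracHellyConst k (n + 1) (n + 1 : ℝ)⁻¹ := by push_cast; ring
      _ ≤ s * (ε ^ (n + 1) ^ n * fracHellyConst k (n + 1) (n + 1 : ℝ)⁻¹) +
            (freq fun a => v ∈ σ a) ^ (n + 1) ^ n *
              fracHellyConst k (n + 1) (n + 1 : ℝ)⁻¹ := by
          gcongr
          exact hU v hvU
      _ ≤ _ := add_le_add hfreq hnew
      _ = _ := (freq_or fun y ⟨ρ, hρ, hyρ⟩ hy =>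
          hv ρ hρ (hyρ (Set.mem_iInter.2 hy.1))).symm
      _ ≤ _ := freq_mono fun y hy => by
          obtain ⟨ρ, hρ, hyρ⟩ | hy := hy
          · exact ⟨ρ, Finset.mem_insert_of_mem hρ, hyρ⟩
          · exact ⟨τ, Finset.mem_insert_self τ 𝓣, hy.2⟩

theorem PropT.exists_cover (hT : PropT E k (n + 1)) (hk : 0 < k) (hE : ∀ e ∈ E, #e = k)
    (hσ : ∀ a, IsIndep E (σ a)) {ε : ℝ} (hε : 0 < ε) {U : Set V}
    (hU : ∀ v ∈ U, ε ≤ freq fun a => v ∈ σ a) :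
    ∃ 𝓣 : Finset (Set V), (∀ τ ∈ 𝓣, IsIndep E τ) ∧
      #𝓣 ≤ ⌊(ε ^ (n + 1) ^ n * fracHellyConst k (n + 1) (n + 1 : ℝ)⁻¹)⁻¹⌋₊ + 1 ∧
      ∀ v ∈ U, ∃ τ ∈ 𝓣, v ∈ τ := by
  have hβ := fracHellyConst_pos hk n.succ_pos (inv_pos.2 (n.cast_add_one_pos (α := ℝ)))
  set δ := ε ^ (n + 1) ^ n * fracHellyConst k (n + 1) (n + 1 : ℝ)⁻¹
  have hδ : 0 < δ := by positivity
  obtain ⟨𝓣, h𝓣, hcard, hcov | hfreq⟩ := hT.exists_cover_or_le_freq hk hE hσ hε hU (⌊δ⁻¹⌋₊ + 1)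
  · exact ⟨𝓣, h𝓣, hcard, hcov⟩
  · have hlt : 1 < ((⌊δ⁻¹⌋₊ + 1 : ℕ) : ℝ) * δ := by
      rw [Nat.cast_succ, ← inv_lt_iff_one_lt_mul₀ hδ]
      exact Nat.lt_floor_add_one δ⁻¹
    exact absurd (hfreq.trans (freq_le_one _)) (not_le.2 hlt)

end WeakNets

section MultiplicativeWeights

variable {V : Type*} {n : ℕ}

/-- The weight of `v` in the multiplicative weights method after the sets `σ a` have been played:
it doubles in each round in which `v` is not covered. -/
noncomputable def mwWeight (σ : Fin n → Set V) (v : V) : ℕ := ∏ a, if v ∈ σ a then 1 else 2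

theorem mwWeight_cons (τ : Set V) (σ : Fin n → Set V) (v : V) :
    (mwWeight (Fin.cons τ σ : Fin (n + 1) → Set V) v : ℝ) =
      2 * mwWeight σ v - if v ∈ τ then (mwWeight σ v : ℝ) else 0 := by
  rw [mwWeight, Fin.prod_univ_succ, Nat.cast_mul]
  simp only [Fin.cons_zero, Fin.cons_succ, mwWeight]
  split_ifs <;> push_cast <;> ring

theorem mwWeight_mul_two_pow_card (σ : Fin n → Set V) (v : V) :
    mwWeight σ v * 2 ^ #{a | v ∈ σ a} = 2 ^ n := by
  rw [← Finset.prod_const, Finset.prod_filter, mwWeight, ← Finset.prod_mul_distrib]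
  calc ∏ a, ((if v ∈ σ a then 1 else 2) * if v ∈ σ a then 2 else 1)
      = ∏ _a : Fin n, 2 := Finset.prod_congr rfl fun a _ => by split_ifs <;> rfl
    _ = 2 ^ n := Fin.prod_const n 2

theorem two_pow_le_mwWeight_mul_exp (σ : Fin n → Set V) (v : V) :
    2 ^ n ≤ mwWeight σ v * Real.exp (n * freq fun a => v ∈ σ a) := by
  have hfreq : n * freq (fun a => v ∈ σ a) = #{a | v ∈ σ a} := by
    simpa [freq] using Fintype.card_mul_expect fun a => if v ∈ σ a then (1 : ℝ) else 0
  have hexp : (2 : ℝ) ^ #{a | v ∈ σ a} ≤ Real.exp #{a | v ∈ σ a} := by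
    rw [← Real.exp_one_pow]
    exact pow_le_pow_left₀ zero_le_two (by linarith [Real.add_one_le_exp 1]) _
  calc (2 : ℝ) ^ n = mwWeight σ v * 2 ^ #{a | v ∈ σ a} :=
        mod_cast (mwWeight_mul_two_pow_card σ v).symm
    _ ≤ _ := by
        rw [hfreq]
        gcongr

variable {U : Finset V} {𝓘 : Set (Set V)} {β : ℝ}

theorem exists_sum_mwWeight_le (h : ∀ μ : V → ℕ, ∃ τ ∈ 𝓘,
      β * ∑ v ∈ U, (μ v : ℝ) ≤ ∑ v ∈ U, if v ∈ τ then (μ v : ℝ) else 0) (n : ℕ) :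
    ∃ σ : Fin n → Set V, (∀ a, σ a ∈ 𝓘) ∧
      ∑ v ∈ U, (mwWeight σ v : ℝ) ≤ #U * (2 * Real.exp (-(β / 2))) ^ n := by
  induction n with
  | zero => exact ⟨Fin.elim0, fun a => a.elim0, by simp [mwWeight]⟩
  | succ n ih =>
    obtain ⟨σ, hσ, hsum⟩ := ih
    obtain ⟨τ, hτ, hcov⟩ := h (mwWeight σ)
    refine ⟨Fin.cons τ σ, Fin.forall_fin_succ.2 ⟨hτ, hσ⟩, ?_⟩
    have hexp : 2 - β ≤ 2 * Real.exp (-(β / 2)) := by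
      linarith [Real.one_sub_le_exp_neg (β / 2)]
    calc ∑ v ∈ U, (mwWeight (Fin.cons τ σ : Fin (n + 1) → Set V) v : ℝ)
        = 2 * ∑ v ∈ U, (mwWeight σ v : ℝ) -
            ∑ v ∈ U, if v ∈ τ then (mwWeight σ v : ℝ) else 0 := by
          simp only [mwWeight_cons, Finset.sum_sub_distrib, Finset.mul_sum]
      _ ≤ (2 - β) * ∑ v ∈ U, (mwWeight σ v : ℝ) := by linarith
      _ ≤ 2 * Real.exp (-(β / 2)) * (#U * (2 * Real.exp (-(β / 2))) ^ n) := by gcongr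
      _ = #U * (2 * Real.exp (-(β / 2))) ^ (n + 1) := by ring

theorem exists_family_div_four_le_freq (hβ : 0 < β)
    (h : ∀ μ : V → ℕ, ∃ τ ∈ 𝓘,
      β * ∑ v ∈ U, (μ v : ℝ) ≤ ∑ v ∈ U, if v ∈ τ then (μ v : ℝ) else 0) :
    ∃ (n : ℕ) (σ : Fin n → Set V), (∀ a, σ a ∈ 𝓘) ∧
      ∀ v ∈ U, β / 4 ≤ freq fun a => v ∈ σ a := by
  obtain ⟨n, hn⟩ := exists_nat_ge (#U / (β / 4))
  obtain ⟨σ, hσ, hsum⟩ := exists_sum_mwWeight_le h n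
  refine ⟨n, σ, hσ, fun v hv => ?_⟩
  by_contra! hlt
  have hbound : (2 : ℝ) ^ n * 1 ≤ 2 ^ n * (#U * Real.exp (-(n * (β / 4)))) := calc
    (2 : ℝ) ^ n * 1 ≤ mwWeight σ v * Real.exp (n * freq fun a => v ∈ σ a) := by
        rw [mul_one]
        exact two_pow_le_mwWeight_mul_exp σ v
    _ ≤ (∑ v ∈ U, (mwWeight σ v : ℝ)) * Real.exp (n * (β / 4)) := by
        gcongr
        exact Finset.single_le_sum (f := fun v => (mwWeight σ v : ℝ))
          (fun v _ => Nat.cast_nonneg _) hv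
    _ ≤ #U * (2 * Real.exp (-(β / 2))) ^ n * Real.exp (n * (β / 4)) := by gcongr
    _ = 2 ^ n * (#U * Real.exp (-(n * (β / 4)))) := by
        rw [mul_pow, ← Real.exp_nat_mul, mul_assoc, mul_assoc, ← Real.exp_add]
        ring_nf
  have hU : Real.exp (n * (β / 4)) ≤ #U := by
    have := le_of_mul_le_mul_left hbound (by positivity)
    rwa [Real.exp_neg, ← div_eq_mul_inv, le_div_iff₀ (Real.exp_pos _), one_mul] at this
  have hn' : (#U : ℝ) ≤ n * (β / 4) := (div_le_iff₀ (by positivity)).1 hn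
  linarith [Real.add_one_le_exp (n * (β / 4))]

end MultiplicativeWeights

section CliqueNumber

variable {V α : Type*} {E : Finset (Finset V)} {k m w : ℕ} {q : α → V}
  {S : Finset α}

theorem injOn_of_forall_image_mem [DecidableEq V] (hk : 2 ≤ k) (hE : ∀ e ∈ E, #e = k) (hS : k ≤ #S)
    (h : ∀ s ⊆ S, #s = k → s.image q ∈ E) : Set.InjOn q S := by
  intro i hi j hj hij
  by_contra hne
  have hpair : {i, j} ⊆ S := Finset.insert_subset hi (Finset.singleton_subset_iff.2 hj)
  obtain ⟨s, hs, hsS, hcard⟩ := Finset.exists_subsuperset_card_eq hpair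
    (Finset.card_le_two.trans hk) hS
  have hinj : Set.InjOn q s :=
    Finset.card_image_iff.1 ((hE _ (h s hsS hcard)).trans hcard.symm)
  exact hne (hinj (hs (by simp)) (hs (by simp)) hij)

theorem CliqueNumLE.card_le_of_injOn [DecidableEq V] (hw : CliqueNumLE E k w) (hq : Set.InjOn q S)
    (h : ∀ s ⊆ S, #s = k → s.image q ∈ E) : #S ≤ w := by
  rw [← Finset.card_image_of_injOn hq]
  refine hw _ fun e he hcard => ?_
  obtain ⟨s, hs, rfl⟩ := Finset.subset_image_iff.1 he
  exact h s (mod_cast hs) (by rwa [Finset.card_image_of_injOn (hq.mono hs)] at hcard)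

theorem isIndep_image_of_forall_image_notMem [DecidableEq V] (hE : ∀ e ∈ E, #e = k)
    (h : ∀ s ⊆ S, #s = k → s.image q ∉ E) : IsIndep E (q '' S) := by
  intro e he heS
  obtain ⟨s, hs, hinj, rfl⟩ := Finset.exists_subset_injOn_image_eq_of_surjOn (S : Set α) e heS
  exact h s (mod_cast hs) (by rw [← hE _ he, Finset.card_image_of_injOn hinj]) he

theorem CliqueNumLE.exists_injective_isIndep (hw : CliqueNumLE E k w) (hk : 2 ≤ k)
    (hE : ∀ e ∈ E, #e = k) {R : ℕ} (hR : IsRamsey.{0} k (w + k) m R) (q : Fin R → V) :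
    ∃ a : Fin m → Fin R, a.Injective ∧ IsIndep E (⋃ i, {q (a i)}) := by
  obtain ⟨S, -, hcard, hS⟩ | ⟨S, -, hcard, hS⟩ := hR (Fin R) (fun s => s.image q ∈ E) Finset.univ
    (Finset.card_fin R).ge
  · have := hw.card_le_of_injOn (injOn_of_forall_image_mem hk hE (by omega) hS) hS
    omega
  · refine ⟨fun i => S.orderEmbOfFin hcard i, (S.orderEmbOfFin hcard).injective,
      (isIndep_image_of_forall_image_notMem hE hS).mono (Set.iUnion_subset fun i => ?_)⟩
    exact Set.singleton_subset_iff.2 (Set.mem_image_of_mem q (S.orderEmbOfFin_mem hcard i))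

theorem CliqueNumLE.inv_pow_le_freq_isIndep [Fintype α] [Nonempty α] (hw : CliqueNumLE E k w)
    (hk : 2 ≤ k) (hE : ∀ e ∈ E, #e = k) {R : ℕ} (hR : IsRamsey.{0} k (w + k) m R) (q : α → V) :
    ((R : ℝ) ^ m)⁻¹ ≤ freq fun f : Fin m → α => IsIndep E (⋃ i, {q (f i)}) := by
  obtain ⟨a, ha⟩ := exists_inv_card_le_freq
    (P := fun (a : Fin m → Fin R) (f : Fin R → α) =>
      a.Injective ∧ IsIndep E (⋃ i, {q (f (a i))}))
    fun f => hw.exists_injective_isIndep hk hE hR (q ∘ f)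
  have hpos : 0 < (Fintype.card (Fin m → Fin R) : ℝ)⁻¹ :=
    inv_pos.2 (Nat.cast_pos.2 (Fintype.card_pos_iff.2 ⟨a⟩))
  obtain ⟨-, hinj, -⟩ := exists_of_freq_pos (hpos.trans_le ha)
  calc ((R : ℝ) ^ m)⁻¹ = (Fintype.card (Fin m → Fin R) : ℝ)⁻¹ := by simp
    _ ≤ _ := ha
    _ ≤ freq fun f : Fin R → α => IsIndep E (⋃ i, {q (f (a i))}) := freq_mono fun f hf => hf.2
    _ = _ := freq_comp_injective hinj fun f : Fin m → α => IsIndep E (⋃ i, {q (f i)})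

end CliqueNumber

section ChromaticNumber

variable {V : Type*} {E : Finset (Finset V)} {k m w R : ℕ}

theorem chromaticLE_of_coloring {C : Type*} [Fintype C] {N : ℕ} (hC : Fintype.card C ≤ N)
    {c : V → C} (hc : ∀ i, IsIndep E (c ⁻¹' {i})) : ChromaticLE E N := by
  obtain ⟨f⟩ : Nonempty (C ↪ Fin N) := Function.Embedding.nonempty_of_card_le (by simpa)
  refine ⟨fun i => {v | f (c v) = i}, fun v => ⟨f (c v), rfl, fun _ h => h.symm⟩, ?_⟩
  rintro i ⟨v, rfl⟩
  exact (hc (c v)).mono fun u hu => f.injective hu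

variable [DecidableEq V]

/-- The fractional Helly theorem is applied to the family of singletons in which `v` occurs `μ v`
times. -/
theorem PropT.exists_isIndep_mul_sum_le (hT : PropT E k m) (hw : CliqueNumLE E k w) (hk : 2 ≤ k)
    (hm : 0 < m) (hE : ∀ e ∈ E, #e = k) (hR : IsRamsey.{0} k (w + k) m R) (hR₀ : 0 < R)
    (U : Finset V) (μ : V → ℕ) :
    ∃ τ, IsIndep E τ ∧ fracHellyConst k m ((R : ℝ) ^ m)⁻¹ * ∑ v ∈ U, (μ v : ℝ) ≤
      ∑ v ∈ U, if v ∈ τ then (μ v : ℝ) else 0 := by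
  let ι : Type _ := Σ v : U, Fin (μ v)
  have hcard (P : V → Prop) : (#{p : ι | P p.1} : ℝ) = ∑ v ∈ U, if P v then (μ v : ℝ) else 0 := by
    rw [← Finset.sum_coe_sort U fun v => if P v then (μ v : ℝ) else 0, ← Finset.sum_boole,
      Fintype.sum_sigma]
    exact Finset.sum_congr rfl fun v _ => by split_ifs <;> simp
  have hcardι : (Fintype.card ι : ℝ) = ∑ v ∈ U, (μ v : ℝ) := by simpa using hcard fun _ => True
  rw [← hcardι]
  obtain hι | hι := isEmpty_or_nonempty ι
  · refine ⟨∅, isIndep_empty (by omega) hE, by simp⟩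
  have hα : (0 : ℝ) < ((R : ℝ) ^ m)⁻¹ := by positivity
  obtain ⟨I, hI, hIE⟩ := hT.exists_le_freq_mem (W := fun p : ι => {(p.1 : V)}) (by omega) hm hE hα
    (hw.inv_pow_le_freq_isIndep hk hE hR fun p : ι => (p.1 : V))
  refine ⟨_, hIE, ?_⟩
  calc fracHellyConst k m ((R : ℝ) ^ m)⁻¹ * Fintype.card ι
      ≤ freq (· ∈ I) * Fintype.card ι := by gcongr
    _ = #I := by
        rw [freq_eq_card_div, div_mul_cancel₀ _ (by simp), Finset.filter_univ_mem]
    _ ≤ #{p : ι | (p.1 : V) ∈ ⋃ i ∈ I, {(i.1 : V)}} := by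
        refine mod_cast Finset.card_le_card fun p hp => ?_
        simpa using ⟨p, hp, rfl⟩
    _ = _ := hcard (· ∈ ⋃ i ∈ I, {(i.1 : V)})

/-- The vertices lying in no edge receive a colour of their own. -/
theorem chromaticLE_of_cover (hk : 0 < k) (hE : ∀ e ∈ E, #e = k) {𝓣 : Finset (Set V)} {N : ℕ}
    (hN : #𝓣 ≤ N) (h𝓣 : ∀ τ ∈ 𝓣, IsIndep E τ)
    (hcov : ∀ v ∈ E.biUnion id, ∃ τ ∈ 𝓣, v ∈ τ) : ChromaticLE E (N + 1) := by
  have hcolor : ∀ v, ∃ i : Option 𝓣,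
      (∀ τ, i = some τ → v ∈ τ.1) ∧ (i = none → ∀ e ∈ E, v ∉ e) := fun v => by
    by_cases hv : ∃ e ∈ E, v ∈ e
    · obtain ⟨τ, hτ, hvτ⟩ := hcov v (Finset.mem_biUnion.2 hv)
      exact ⟨some ⟨τ, hτ⟩, by simpa using hvτ, by simp⟩
    · exact ⟨none, by simp, fun _ e he hve => hv ⟨e, he, hve⟩⟩
  choose c hsome hnone using hcolor
  refine chromaticLE_of_coloring (c := c) (by simpa) fun i e he hei => ?_
  cases i with
  | some τ => exact h𝓣 τ τ.2 e he fun v hv => hsome v τ (hei hv)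
  | none =>
    obtain ⟨v, hv⟩ : e.Nonempty := Finset.card_pos.1 (hk.trans_eq (hE e he).symm)
    exact hnone v (hei hv) e he hv

theorem exists_chromaticLE (hk : 2 ≤ k) (n w : ℕ) :
    ∃ N, ∀ (V : Type u) [DecidableEq V] (E : Finset (Finset V)), (∀ e ∈ E, #e = k) →
      PropT E k (n + 1) → CliqueNumLE E k w → ChromaticLE E N := by
  obtain ⟨R, hR⟩ := exists_isRamsey.{0} k (w + k) (n + 1)
  have hk₀ : 0 < k := by omega
  let β := fracHellyConst k (n + 1) (((R + 1 : ℕ) : ℝ) ^ (n + 1))⁻¹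
  have hβ : 0 < β := fracHellyConst_pos hk₀ n.succ_pos (by positivity)
  refine ⟨⌊((β / 4) ^ (n + 1) ^ n * fracHellyConst k (n + 1) (n + 1 : ℝ)⁻¹)⁻¹⌋₊ + 1 + 1,
    fun V _ E hE hT hw => ?_⟩
  obtain ⟨N, σ, hσ, hfreq⟩ := exists_family_div_four_le_freq (U := E.biUnion id)
    (𝓘 := {τ | IsIndep E τ}) hβ fun μ => hT.exists_isIndep_mul_sum_le hw hk n.succ_pos hE
      (hR.mono R.le_succ) R.succ_pos _ μ
  obtain ⟨𝓣, h𝓣, hcard, hcov⟩ := hT.exists_cover hk₀ hE hσ (div_pos hβ four_pos)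
    (U := {v | v ∈ E.biUnion id}) hfreq
  exact chromaticLE_of_cover hk₀ hE hcard h𝓣 hcov

end ChromaticNumber

theorem Delta_km_chi_bounded_general (m k : ℕ) (hk : 2 ≤ k) :
    (∃ t : ℕ, k ≤ t ∧ ∀ (V : Type u) [DecidableEq V] (E : Finset (Finset V)),
        (∀ e ∈ E, e.card = k) → PropDelta E k m → PropT E k t) ∧
    (∃ f : ℕ → ℕ, ∀ (V : Type u) [DecidableEq V] (E : Finset (Finset V)),
        (∀ e ∈ E, e.card = k) → PropDelta E k m →
        ∀ w : ℕ, CliqueNumLE E k w → ChromaticLE E (f w)) := by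
  have hT (V : Type u) [DecidableEq V] (E : Finset (Finset V)) (hE : ∀ e ∈ E, #e = k)
      (h : PropDelta E k m) : PropT E k ((k ! * (m - 1) ^ k + 1) * k + 1) := h.propT hE
  choose f hf using exists_chromaticLE.{u} hk ((k ! * (m - 1) ^ k + 1) * k)
  exact ⟨⟨_, (Nat.le_mul_of_pos_left k (Nat.succ_pos _)).trans (Nat.le_succ _), hT⟩,
    f, fun V _ E hE h w => hf w V E hE (hT V E hE h)⟩

/-- Property `δ_k(m)` implies property `T_k(t)` for some `t = t(k,m)`;
consequently the class `Δ_k(m)` is χ-bounded. -/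
theorem Delta_km_chi_bounded (m k : ℕ) (hk : 2 ≤ k) (hkm : k ≤ m) :
    (∃ t : ℕ, k ≤ t ∧ ∀ (V : Type u) [Fintype V] [DecidableEq V]
        (E : Finset (Finset V)), (∀ e ∈ E, e.card = k) → E.Nonempty →
        PropDelta E k m → PropT E k t) ∧
    (∃ f : ℕ → ℕ, ∀ (V : Type u) [Fintype V] [DecidableEq V]
        (E : Finset (Finset V)), (∀ e ∈ E, e.card = k) → E.Nonempty →
        PropDelta E k m → ∀ w : ℕ, CliqueNumLE E k w → ChromaticLE E (f w)) := by
  obtain ⟨⟨t, hkt, hT⟩, f, hf⟩ := Delta_km_chi_bounded_general.{u} m k hk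
  exact ⟨⟨t, hkt, fun V _ _ E hE _ => hT V E hE⟩, f, fun V _ _ E hE _ => hf V E hE⟩
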